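/- The tangential derivative of the boundary restriction of the singular function Θ (in the direction of increasing x, i.e. counter-clockwise along the boundary of the upper half-plane) equals 0 at every x > 0 and equals −J′ at every x < 0; hence the jump of the one-sided limits at the origin of this tangential derivative equals 0 − (−J′) = J′, reproducing exactly the prescribed jump ⟦g′⟧ of the tangential derivative of the boundary data (identity (2.8) of the paper, case ω = π). -/

import Mathlib

/-!
On the real axis the logarithmic term of `σ` vanishes and the argument is locally constant off
the origin: it is `0` on the positive half-line and `π` on the negative one. Hence
`Θ(x,0) = a` for `x > 0` and `Θ(x,0) = a - J - J' x` for `x < 0`, which gives the derivative on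
each side. The derivatives are obtained as `HasDerivAt` statements, so the values are genuine and
not the default value of `deriv`; the jump of the one-sided limits of the derivative is
`Theta_deriv_jump`.
-/

open Real

/-- The principal argument as a function of Cartesian coordinates `(x, y)`. -/
noncomputable def planeArg (x y : ℝ) : ℝ := Complex.arg ((x : ℂ) + (y : ℂ) * Complex.I)

/-- The auxiliary singular function `σ(x,y) = y·log√(x²+y²) + x·arg(x,y)`. -/
noncomputable def sigmaFun (x y : ℝ) : ℝ :=
  y * Real.log (Real.sqrt (x ^ 2 + y ^ 2)) + x * planeArg x y

/-- The singular function at a boundary point with interior angle `ω = π`: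
`Θ(x,y) = a − (1/π)(J·arg(x,y) + J′·σ(x,y))`. -/
noncomputable def ThetaFun (a J J' x y : ℝ) : ℝ :=
  a - (1 / π) * (J * planeArg x y + J' * sigmaFun x y)

lemma ThetaFun_of_pos (a J J' : ℝ) {x : ℝ} (hx : 0 < x) : ThetaFun a J J' x 0 = a := by
  have h : planeArg x 0 = 0 := by
    simp [planeArg, Complex.arg_ofReal_of_nonneg hx.le]
  simp [ThetaFun, sigmaFun, h]

lemma ThetaFun_of_neg (a J J' : ℝ) {x : ℝ} (hx : x < 0) :
    ThetaFun a J J' x 0 = a - J - J' * x := by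
  have h : planeArg x 0 = π := by
    simp [planeArg, Complex.arg_ofReal_of_neg hx]
  have hpi : π ≠ 0 := Real.pi_ne_zero
  simp only [ThetaFun, sigmaFun, h]
  field_simp
  ring

lemma hasDerivAt_ThetaFun_of_pos (a J J' : ℝ) {x : ℝ} (hx : 0 < x) :
    HasDerivAt (fun t : ℝ => ThetaFun a J J' t 0) 0 x := by
  refine (hasDerivAt_const x a).congr_of_eventuallyEq ?_
  filter_upwards [lt_mem_nhds hx] with t ht using ThetaFun_of_pos a J J' ht

lemma hasDerivAt_ThetaFun_of_neg (a J J' : ℝ) {x : ℝ} (hx : x < 0) :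
    HasDerivAt (fun t : ℝ => ThetaFun a J J' t 0) (-J') x := by
  have h : HasDerivAt (fun t : ℝ => a - J - J' * t) (-J') x := by
    simpa using ((hasDerivAt_id x).const_mul J').const_sub (a - J)
  refine h.congr_of_eventuallyEq ?_
  filter_upwards [gt_mem_nhds hx] with t ht using ThetaFun_of_neg a J J' ht

/-- The one-sided limits at the origin of the tangential derivative exist, and their difference
(right minus left) is `J'`. -/
lemma Theta_deriv_jump (a J J' : ℝ) :
    ∃ r l : ℝ,
      Filter.Tendsto (deriv fun t : ℝ => ThetaFun a J J' t 0) (nhdsWithin 0 (Set.Ioi 0))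
        (nhds r) ∧
      Filter.Tendsto (deriv fun t : ℝ => ThetaFun a J J' t 0) (nhdsWithin 0 (Set.Iio 0))
        (nhds l) ∧
      r - l = J' := by
  refine ⟨0, -J', ?_, ?_, by ring⟩
  · refine tendsto_const_nhds.congr' ?_
    filter_upwards [self_mem_nhdsWithin] with t ht
    exact (hasDerivAt_ThetaFun_of_pos a J J' ht).deriv.symm
  · refine tendsto_const_nhds.congr' ?_
    filter_upwards [self_mem_nhdsWithin] with t ht
    exact (hasDerivAt_ThetaFun_of_neg a J J' ht).deriv.symm

/-- The tangential derivative of the boundary restriction `x ↦ Θ(x,0)` (in the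
direction of increasing `x`) equals `0` for `x > 0` and `−J′` for `x < 0`; hence the
jump of its one-sided limits at the origin is `0 − (−J′) = J′`, reproducing exactly
the prescribed jump `⟦g′⟧` (identity (2.8) of the paper, case `ω = π`). -/
theorem Theta_boundary_tangential_derivative_and_jump (a J J' : ℝ) :
    (∀ x : ℝ, 0 < x → deriv (fun t : ℝ => ThetaFun a J J' t 0) x = 0) ∧
    (∀ x : ℝ, x < 0 → deriv (fun t : ℝ => ThetaFun a J J' t 0) x = -J') ∧
    (0 : ℝ) - (-J') = J' := by
  exact ⟨fun x hx => (hasDerivAt_ThetaFun_of_pos a J J' hx).deriv,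
    fun x hx => (hasDerivAt_ThetaFun_of_neg a J J' hx).deriv, by ring⟩
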